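/- Let α, β, γ > −1 with α+γ+3/2 > 0 and β+γ+3/2 > 0. Suppose that for each pair (α',β') ∈ {(α,β), (α+1,β+1), (α,β+1), (α+1,β)} and each n, {P_{k,n}^{α',β',γ} : 0 ≤ k ≤ n} is an orthonormal basis of V_n(W_{α',β',γ}) on Ω. Set b^{(i,j)} := (a_{α+i,β+j,γ} / a_{α,β,γ})^{1/2} and s(x,y) := (2xy, x²+y²−1). Then for every n ≥ 0: the 2n+1 polynomials ₁Q_{k,2n}(x,y) := P_{k,n}^{α,β,γ}(s(x,y)) (0 ≤ k ≤ n) and ₂Q_{k,2n}(x,y) := b^{(1,1)} (x²−y²) P_{k,n−1}^{α+1,β+1,γ}(s(x,y)) (0 ≤ k ≤ n−1) form an orthonormal basis of V_{2n}(𝒲_{α,β,γ}), and the 2n+2 polynomials ₁Q_{k,2n+1}(x,y) := b^{(0,1)} (x+y) P_{k,n}^{α,β+1,γ}(s(x,y)) (0 ≤ k ≤ n) and ₂Q_{k,2n+1}(x,y) := b^{(1,0)} (x−y) P_{k,n}^{α+1,β,γ}(s(x,y)) (0 ≤ k ≤ n) form an orthonormal basis of V_{2n+1}(𝒲_{α,β,γ}),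 with respect to ⟨f,g⟩ := ∫_{[−1,1]²} f g 𝒲_{α,β,γ}. -/

import Mathlib

open MeasureTheory Real Set Filter
open scoped ENNReal

noncomputable section

/-- The parabolic-type domain `Ω`, the image of the triangle `-1 < x < y < 1`
under `(x, y) ↦ (x + y, x y)`. -/
def omegaDom : Set (ℝ × ℝ) :=
  {q | ∃ x y : ℝ, -1 < x ∧ x < y ∧ y < 1 ∧ q = (x + y, x * y)}

/-- The square `[-1,1]²`. -/
def sqDom : Set (ℝ × ℝ) := Icc (-1 : ℝ) 1 ×ˢ Icc (-1 : ℝ) 1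

/-- The open triangle `-1 < x < y < 1`. -/
def triDom : Set (ℝ × ℝ) := {q | -1 < q.1 ∧ q.1 < q.2 ∧ q.2 < 1}

/-- The smaller root `x(u,v)` of `t² - u t + v = 0`. -/
def xRoot (q : ℝ × ℝ) : ℝ := (q.1 - Real.sqrt (q.1 ^ 2 - 4 * q.2)) / 2

/-- The larger root `y(u,v)` of `t² - u t + v = 0`. -/
def yRoot (q : ℝ × ℝ) : ℝ := (q.1 + Real.sqrt (q.1 ^ 2 - 4 * q.2)) / 2

/-- Evaluation of a two-variable polynomial at a point of `ℝ²`. -/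
def evalP (P : MvPolynomial (Fin 2) ℝ) (q : ℝ × ℝ) : ℝ :=
  MvPolynomial.eval ![q.1, q.2] P

/-- The space `V_n(W)` of orthogonal polynomials of degree `n` for the weight `W`
on the domain `D`: polynomials of exact total degree `n` orthogonal to all
polynomials of lower degree. -/
def Vpoly (D : Set (ℝ × ℝ)) (W : ℝ × ℝ → ℝ) (n : ℕ) : Set (MvPolynomial (Fin 2) ℝ) :=
  {P | P.totalDegree = n ∧ ∀ Q : MvPolynomial (Fin 2) ℝ, Q.totalDegree < n →
    (∫ q in D, evalP P q * evalP Q q * W q) = 0}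

/-- `Q 0, …, Q n` is an orthonormal basis of `V_n(W)` on `D`. -/
def isONBVn (D : Set (ℝ × ℝ)) (W : ℝ × ℝ → ℝ) (n : ℕ)
    (Q : ℕ → MvPolynomial (Fin 2) ℝ) : Prop :=
  (∀ k, k ≤ n → Q k ∈ Vpoly D W n) ∧
  (∀ k, k ≤ n → ∀ j, j ≤ n →
    (∫ q in D, evalP (Q k) q * evalP (Q j) q * W q) = if k = j then 1 else 0) ∧
  (∀ R ∈ Vpoly D W n, R ∈ Submodule.span ℝ (Q '' Set.Iic n))

/-- `K` is the reproducing kernel of `Π_n²` in `L²(W)` on the domain `D`: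
it is a polynomial function, for each fixed `x ∈ D` it is a polynomial of total
degree `≤ n` in the second variable, and it reproduces every polynomial of total
degree `≤ n`. -/
def IsRK (D : Set (ℝ × ℝ)) (W : ℝ × ℝ → ℝ) (n : ℕ) (K : ℝ × ℝ → ℝ × ℝ → ℝ) : Prop :=
  (∃ KP : MvPolynomial (Fin 4) ℝ,
    ∀ x y : ℝ × ℝ, K x y = MvPolynomial.eval ![x.1, x.2, y.1, y.2] KP) ∧
  (∀ x ∈ D, ∃ P : MvPolynomial (Fin 2) ℝ, P.totalDegree ≤ n ∧ ∀ y, K x y = evalP P y) ∧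
  (∀ P : MvPolynomial (Fin 2) ℝ, P.totalDegree ≤ n →
    ∀ x ∈ D, (∫ y in D, K x y * evalP P y * W y) = evalP P x)

/-- `p` is the sequence of orthonormal polynomials with respect to the weight `w`
on `[-1,1]`: `p n` has degree exactly `n`, positive leading coefficient, and the
`p n` are orthonormal in `L²(w)`. -/
def IsONPS (w : ℝ → ℝ) (p : ℕ → Polynomial ℝ) : Prop :=
  (∀ n, (p n).natDegree = n) ∧ (∀ n, 0 < (p n).leadingCoeff) ∧
  (∀ n m, (∫ x in Icc (-1:ℝ) 1, (p n).eval x * (p m).eval x * w x)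
    = if n = m then 1 else 0)

/-- The Christoffel–Darboux kernel `k_n(x,y) = ∑_{j=0}^n p_j(x) p_j(y)`. -/
def CDK (p : ℕ → Polynomial ℝ) (n : ℕ) (x y : ℝ) : ℝ :=
  ∑ j ∈ Finset.range (n + 1), (p j).eval x * (p j).eval y

/-- The Jacobi factor `J_{a,b}(x) = (1-x)^a (1+x)^b`. -/
def Jw (a b : ℝ) (x : ℝ) : ℝ := (1 - x) ^ a * (1 + x) ^ b

/-- The factor `J*_{a,b}(u,v) = (1-u+v)^a (1+u+v)^b` on `Ω`. -/
def JstarW (a b : ℝ) (q : ℝ × ℝ) : ℝ := (1 - q.1 + q.2) ^ a * (1 + q.1 + q.2) ^ b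

/-- Modulus of continuity of `ψ` on `[-1,1]`. -/
def modCont (ψ : ℝ → ℝ) (t : ℝ) : ℝ :=
  sSup {d : ℝ | ∃ x ∈ Icc (-1:ℝ) 1, ∃ y ∈ Icc (-1:ℝ) 1, |x - y| ≤ t ∧ d = |ψ x - ψ y|}

/-- The generalized Jacobi class `GJ`. -/
def IsGJ (w : ℝ → ℝ) : Prop :=
  ∃ (r : ℕ) (ψ : ℝ → ℝ) (γ₀ γ₁ : ℝ) (γs xs : Fin r → ℝ),
    -1 < γ₀ ∧ -1 < γ₁ ∧ (∀ i, -1 < γs i) ∧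
    StrictMono xs ∧ (∀ i, xs i ∈ Ioo (-1:ℝ) 1) ∧
    ContinuousOn ψ (Icc (-1:ℝ) 1) ∧ (∀ x ∈ Icc (-1:ℝ) 1, 0 < ψ x) ∧
    IntegrableOn (fun t => modCont ψ t / t) (Ioc (0:ℝ) 1) ∧
    (∀ x : ℝ, |x| ≤ 1 → w x = ψ x * (1 - x) ^ γ₀ * (1 + x) ^ γ₁ * ∏ i, |x - xs i| ^ γs i) ∧
    (∀ x : ℝ, 1 < |x| → w x = 0)

/-- The `L^p`-norm `‖f‖_{w,e}` on `[-1,1]` (as an extended nonnegative real). -/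
def lpnormI (w : ℝ → ℝ) (e : ℝ) (f : ℝ → ℝ) : ℝ≥0∞ :=
  (∫⁻ x in Icc (-1:ℝ) 1, ENNReal.ofReal (|f x| ^ e * w x)) ^ (1 / e)

/-- The `L^p`-norm `‖f‖_{W,e}` on a planar domain `D` (as an extended nonnegative real). -/
def lpnormD (D : Set (ℝ × ℝ)) (W : ℝ × ℝ → ℝ) (e : ℝ) (f : ℝ × ℝ → ℝ) : ℝ≥0∞ :=
  (∫⁻ q in D, ENNReal.ofReal (|f q| ^ e * W q)) ^ (1 / e)

/-- The operator `s_n^{i,j}(w; f, x)` built from the Christoffel–Darboux kernel of the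
orthonormal polynomials `pij` of the weight `J_{i,j} w`. -/
def snOp (w : ℝ → ℝ) (pij : ℕ → Polynomial ℝ) (i j : ℝ) (n : ℕ) (f : ℝ → ℝ) (x : ℝ) : ℝ :=
  Jw (i/2) (j/2) x * ∫ y in Icc (-1:ℝ) 1, f y * CDK pij n x y * Jw (i/2) (j/2) y * w y

/-- Substitution `(x, y) ↦ (2 x y, x² + y² - 1)` on two-variable polynomials. -/
def quadSub (P : MvPolynomial (Fin 2) ℝ) : MvPolynomial (Fin 2) ℝ :=
  MvPolynomial.aeval
    ![2 * MvPolynomial.X 0 * MvPolynomial.X 1,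
      MvPolynomial.X 0 ^ 2 + MvPolynomial.X 1 ^ 2 - 1] P

/-- A one-variable polynomial viewed as a polynomial in the first variable. -/
def polyX (q : Polynomial ℝ) : MvPolynomial (Fin 2) ℝ :=
  Polynomial.aeval (MvPolynomial.X 0) q

/-- A one-variable polynomial viewed as a polynomial in the second variable. -/
def polyY (q : Polynomial ℝ) : MvPolynomial (Fin 2) ℝ :=
  Polynomial.aeval (MvPolynomial.X 1) q

/-! In the coordinates `x + y`, `x - y` the map `s(x, y) = (2xy, x² + y² - 1)` squares both
variables, up to an affine change of variables. Splitting monomials by the parities of their two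
exponents therefore writes every polynomial as `∑ (x + y)^i (x - y)^j P_ij(s(x, y))` over
`i, j ∈ {0, 1}`. The four sectors are mutually orthogonal, because the reflections
`(x, y) ↦ (-y, -x)` and `(x, y) ↦ (y, x)` preserve the weight and act on them by different signs.
Inside one sector, `s` covers `Ω` four times with Jacobian `4 |x² - y²|`, so the inner product
becomes that of `Ω` for the weight times `(1 + u + v)^i (1 - u + v)^j`, which raises `β` by `i` and
`α` by `j`. Finally `P` gives degree `2 deg P + i + j`, so that `i + j` even contributes to `V_{2n}`
and `i + j` odd to `V_{2n+1}`. -/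

open MvPolynomial

section PolynomialDegree

variable {σ τ R : Type*} [CommSemiring R]

lemma totalDegree_aeval_le {f : σ → MvPolynomial τ R} {d : ℕ}
    (hf : ∀ i, (f i).totalDegree ≤ d) (P : MvPolynomial σ R) :
    (aeval f P).totalDegree ≤ d * P.totalDegree := by
  rw [aeval_def, eval₂_eq]
  refine totalDegree_finsetSum_le fun m hm => ?_
  calc (algebraMap R (MvPolynomial τ R) (coeff m P) * ∏ i ∈ m.support, f i ^ m i).totalDegree
      ≤ 0 + ∑ i ∈ m.support, m i * d := by
        refine (totalDegree_mul _ _).trans (add_le_add (totalDegree_C _).le ?_)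
        refine (totalDegree_finsetProd _ _).trans (Finset.sum_le_sum fun i _ => ?_)
        exact (totalDegree_pow _ _).trans (Nat.mul_le_mul_left _ (hf i))
    _ = d * m.sum (fun _ k => k) := by
        rw [zero_add, ← Finset.sum_mul, mul_comm]; rfl
    _ ≤ d * P.totalDegree := Nat.mul_le_mul_left _ (le_totalDegree hm)

lemma totalDegree_algHom_le {φ : MvPolynomial σ R →ₐ[R] MvPolynomial τ R}
    (hφ : ∀ i, (φ (X i)).totalDegree ≤ 1) (P : MvPolynomial σ R) :
    (φ P).totalDegree ≤ P.totalDegree := by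
  rw [aeval_unique φ, ← one_mul P.totalDegree]
  exact totalDegree_aeval_le hφ P

lemma totalDegree_algEquiv {φ : MvPolynomial σ R ≃ₐ[R] MvPolynomial τ R}
    (hφ : ∀ i, (φ (X i)).totalDegree ≤ 1) (hφ_symm : ∀ i, (φ.symm (X i)).totalDegree ≤ 1)
    (P : MvPolynomial σ R) : (φ P).totalDegree = P.totalDegree := by
  refine (totalDegree_algHom_le (φ := φ.toAlgHom) hφ P).antisymm ?_
  simpa using totalDegree_algHom_le (φ := φ.symm.toAlgHom) hφ_symm (φ P)

lemma monomial_eq_prod_X_pow_mod_mul_expand [Fintype σ] (p : ℕ) (m : σ →₀ ℕ) (c : R) :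
    monomial m c =
      (∏ i, X i ^ (m i % p)) * expand p (monomial (m.mapRange (· / p) (Nat.zero_div p)) c) := by
  have prod_eq (k : σ →₀ ℕ) : k.prod (fun i n => (X i : MvPolynomial σ R) ^ n) =
      ∏ i, X i ^ k i := Finsupp.prod_fintype _ _ fun _ => pow_zero _
  rw [expand_monomial, monomial_eq, monomial_eq, prod_eq, prod_eq, mul_left_comm,
    ← Finset.prod_mul_distrib]
  simp only [← pow_add, Finsupp.smul_apply, Finsupp.mapRange_apply, smul_eq_mul, Nat.mod_add_div]

lemma exists_eq_sum_prod_X_pow_mul_expand [Fintype σ] [DecidableEq σ] (p : ℕ) [NeZero p]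
    (P : MvPolynomial σ R) :
    ∃ r : (σ → Fin p) → MvPolynomial σ R,
      P = ∑ e, (∏ i, X i ^ (e i : ℕ)) * expand p (r e) ∧
      ∀ e, r e ≠ 0 → p * (r e).totalDegree + ∑ i, (e i : ℕ) ≤ P.totalDegree := by
  let residue (m : σ →₀ ℕ) : σ → Fin p := fun i => Fin.ofNat p (m i)
  let quotient (m : σ →₀ ℕ) : σ →₀ ℕ := m.mapRange (· / p) (Nat.zero_div p)
  have degree_eq (m : σ →₀ ℕ) :
      p * (quotient m).sum (fun _ k => k) + ∑ i, (residue m i : ℕ) = m.sum fun _ k => k := by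
    rw [Finsupp.sum_fintype _ _ fun _ => rfl, Finsupp.sum_fintype _ _ fun _ => rfl,
      Finset.mul_sum, ← Finset.sum_add_distrib]
    exact Finset.sum_congr rfl fun i _ => Nat.div_add_mod (m i) p
  refine ⟨fun e => ∑ m ∈ P.support with residue m = e, monomial (quotient m) (coeff m P),
    ?_, fun e he => ?_⟩
  · calc P = ∑ m ∈ P.support, monomial m (coeff m P) := P.as_sum
      _ = ∑ e, ∑ m ∈ P.support with residue m = e, monomial m (coeff m P) :=
        (Finset.sum_fiberwise _ residue _).symm
      _ = _ := Finset.sum_congr rfl fun e _ => by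
        rw [map_sum, Finset.mul_sum]
        refine Finset.sum_congr rfl fun m hm => ?_
        rw [← (Finset.mem_filter.1 hm).2]
        exact monomial_eq_prod_X_pow_mod_mul_expand p m _
  · have degree_le {m : σ →₀ ℕ} (hm : m ∈ P.support.filter (residue · = e)) :
        p * (quotient m).sum (fun _ k => k) + ∑ i, (e i : ℕ) ≤ P.totalDegree := by
      obtain ⟨hmP, rfl⟩ := Finset.mem_filter.1 hm
      exact (degree_eq m).trans_le (le_totalDegree hmP)
    obtain ⟨m₀, hm₀, -⟩ := Finset.exists_ne_zero_of_sum_ne_zero he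
    have residue_le := le_of_add_le_right (degree_le hm₀)
    rw [← Nat.le_sub_iff_add_le residue_le, mul_comm,
      ← Nat.le_div_iff_mul_le (NeZero.pos p)]
    refine totalDegree_finsetSum_le fun m hm => (totalDegree_monomial_le _ _).trans ?_
    rw [Nat.le_div_iff_mul_le (NeZero.pos p), Nat.le_sub_iff_add_le residue_le, mul_comm]
    exact degree_le hm

end PolynomialDegree

section Sectors

/-- The linear change of variables `P ↦ P(x + y, x - y)`. -/
def sumDiffEquiv : MvPolynomial (Fin 2) ℝ ≃ₐ[ℝ] MvPolynomial (Fin 2) ℝ :=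
  AlgEquiv.ofAlgHom (aeval ![X 0 + X 1, X 0 - X 1])
    (aeval ![(2⁻¹ : ℝ) • (X 0 + X 1), (2⁻¹ : ℝ) • (X 0 - X 1)])
    (by ext i : 1; fin_cases i <;> simp <;> module)
    (by ext i : 1; fin_cases i <;> simp <;> module)

/-- The affine change of variables `P ↦ P((u - v) / 2, (u + v) / 2 - 1)`. Conjugating squaring of
the variables by it and `sumDiffEquiv` gives `quadSub`, since `2xy` and `x² + y²` are half the
difference and the sum of `(x + y)²` and `(x - y)²`. -/
def halfDiffSumEquiv : MvPolynomial (Fin 2) ℝ ≃ₐ[ℝ] MvPolynomial (Fin 2) ℝ :=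
  AlgEquiv.ofAlgHom (aeval ![(2⁻¹ : ℝ) • (X 0 - X 1), (2⁻¹ : ℝ) • (X 0 + X 1) - 1])
    (aeval ![1 + X 0 + X 1, 1 - X 0 + X 1])
    (by ext i : 1; fin_cases i <;> simp <;> module)
    (by ext i : 1; fin_cases i <;> simp <;> module)

lemma quadSub_eq_sumDiffEquiv_expand (P : MvPolynomial (Fin 2) ℝ) :
    quadSub P = sumDiffEquiv (expand 2 (halfDiffSumEquiv P)) := by
  change aeval _ P = (sumDiffEquiv.toAlgHom.comp ((expand 2).comp halfDiffSumEquiv.toAlgHom)) P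
  congr 1
  ext i : 1
  fin_cases i
  · suffices 2 * X 0 * X 1 = (2⁻¹ : ℝ) •
        ((X 0 + X 1) ^ 2 - (X 0 - X 1) ^ 2 : MvPolynomial (Fin 2) ℝ) by
      simpa [sumDiffEquiv, halfDiffSumEquiv]
    algebra
  · suffices X 0 ^ 2 + X 1 ^ 2 - 1 = (2⁻¹ : ℝ) •
        ((X 0 + X 1) ^ 2 + (X 0 - X 1) ^ 2) - (1 : MvPolynomial (Fin 2) ℝ) by
      simpa [sumDiffEquiv, halfDiffSumEquiv]
    algebra

lemma totalDegree_smul_X_add_smul_X_add_C_le (a b c : ℝ) :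
    (a • X 0 + b • X 1 + C c : MvPolynomial (Fin 2) ℝ).totalDegree ≤ 1 := by
  refine (totalDegree_add _ _).trans (max_le ((totalDegree_add _ _).trans (max_le ?_ ?_)) ?_)
  · exact (totalDegree_smul_le _ _).trans (totalDegree_X _).le
  · exact (totalDegree_smul_le _ _).trans (totalDegree_X _).le
  · exact (totalDegree_C c).trans_le zero_le_one

lemma totalDegree_sumDiffEquiv (P : MvPolynomial (Fin 2) ℝ) :
    (sumDiffEquiv P).totalDegree = P.totalDegree := by
  refine totalDegree_algEquiv (fun i => ?_) (fun i => ?_) P <;> fin_cases i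
  · convert totalDegree_smul_X_add_smul_X_add_C_le 1 1 0 using 2
    simp [sumDiffEquiv]
  · convert totalDegree_smul_X_add_smul_X_add_C_le 1 (-1) 0 using 2
    simp [sumDiffEquiv, sub_eq_add_neg]
  · convert totalDegree_smul_X_add_smul_X_add_C_le 2⁻¹ 2⁻¹ 0 using 2
    simp [sumDiffEquiv]
  · convert totalDegree_smul_X_add_smul_X_add_C_le 2⁻¹ (-2⁻¹) 0 using 2
    simp [sumDiffEquiv, sub_eq_add_neg]

lemma totalDegree_halfDiffSumEquiv (P : MvPolynomial (Fin 2) ℝ) :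
    (halfDiffSumEquiv P).totalDegree = P.totalDegree := by
  refine totalDegree_algEquiv (fun i => ?_) (fun i => ?_) P <;> fin_cases i
  · convert totalDegree_smul_X_add_smul_X_add_C_le 2⁻¹ (-2⁻¹) 0 using 2
    simp [halfDiffSumEquiv, sub_eq_add_neg]
  · convert totalDegree_smul_X_add_smul_X_add_C_le 2⁻¹ 2⁻¹ (-1) using 2
    simp [halfDiffSumEquiv, sub_eq_add_neg]
  · convert totalDegree_smul_X_add_smul_X_add_C_le 1 1 1 using 2
    simp [halfDiffSumEquiv, add_comm, add_left_comm, add_assoc]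
  · convert totalDegree_smul_X_add_smul_X_add_C_le (-1) 1 1 using 2
    simp [halfDiffSumEquiv, sub_eq_add_neg, add_comm, add_left_comm, add_assoc]

/-- The generator `(x + y) ^ e 0 * (x - y) ^ e 1` of the sector `e`: every polynomial splits into
four sectors, according to its parities under `(x, y) ↦ (-y, -x)` and `(x, y) ↦ (y, x)`. -/
def sectorGen (e : Fin 2 → Fin 2) : MvPolynomial (Fin 2) ℝ :=
  ∏ i, sumDiffEquiv (X i) ^ (e i : ℕ)

/-- The parametrization of the sector `e` by polynomials on `Ω`. -/
def sectorLift (e : Fin 2 → Fin 2) : MvPolynomial (Fin 2) ℝ →ₗ[ℝ] MvPolynomial (Fin 2) ℝ :=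
  LinearMap.mulLeft ℝ (sectorGen e) ∘ₗ
    (aeval ![2 * X 0 * X 1, X 0 ^ 2 + X 1 ^ 2 - 1]).toLinearMap

lemma sectorLift_apply (e : Fin 2 → Fin 2) (P : MvPolynomial (Fin 2) ℝ) :
    sectorLift e P = sectorGen e * quadSub P := rfl

lemma sectorGen_eq (e : Fin 2 → Fin 2) :
    sectorGen e = (X 0 + X 1) ^ (e 0 : ℕ) * (X 0 - X 1) ^ (e 1 : ℕ) := by
  simp [sectorGen, sumDiffEquiv]

lemma sectorLift_eq_sumDiffEquiv (e : Fin 2 → Fin 2) (P : MvPolynomial (Fin 2) ℝ) :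
    sectorLift e P = sumDiffEquiv ((∏ i, X i ^ (e i : ℕ)) * expand 2 (halfDiffSumEquiv P)) := by
  simp only [sectorLift_apply, quadSub_eq_sumDiffEquiv_expand, sectorGen, map_mul, map_prod,
    map_pow]

lemma totalDegree_sectorLift (e : Fin 2 → Fin 2) {P : MvPolynomial (Fin 2) ℝ} (hP : P ≠ 0) :
    (sectorLift e P).totalDegree = 2 * P.totalDegree + ∑ i, (e i : ℕ) := by
  have hexpand : expand 2 (halfDiffSumEquiv P) ≠ 0 :=
    (expand_ne_zero two_pos).2 (by simpa using hP)
  have hprod : ∏ i, (X i : MvPolynomial (Fin 2) ℝ) ^ (e i : ℕ) ≠ 0 :=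
    Finset.prod_ne_zero_iff.2 fun i _ => pow_ne_zero _ (X_ne_zero i)
  rw [sectorLift_eq_sumDiffEquiv, totalDegree_sumDiffEquiv,
    totalDegree_mul_of_isDomain hprod hexpand, totalDegree_expand, totalDegree_halfDiffSumEquiv]
  simp [Fin.prod_univ_two, totalDegree_mul_of_isDomain, X_ne_zero, add_comm, mul_comm]

lemma exists_eq_sum_sectorLift (R : MvPolynomial (Fin 2) ℝ) :
    ∃ r : (Fin 2 → Fin 2) → MvPolynomial (Fin 2) ℝ, R = ∑ e, sectorLift e (r e) ∧
      ∀ e, r e ≠ 0 → 2 * (r e).totalDegree + ∑ i, (e i : ℕ) ≤ R.totalDegree := by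
  obtain ⟨r, hr, hdeg⟩ := exists_eq_sum_prod_X_pow_mul_expand 2 (sumDiffEquiv.symm R)
  refine ⟨fun e => halfDiffSumEquiv.symm (r e), ?_, fun e he => ?_⟩
  · simp only [sectorLift_eq_sumDiffEquiv, AlgEquiv.apply_symm_apply]
    rw [← map_sum, ← hr, AlgEquiv.apply_symm_apply]
  · have key := hdeg e (by simpa using he)
    rwa [← totalDegree_halfDiffSumEquiv, AlgEquiv.apply_symm_apply,
      ← sumDiffEquiv.apply_symm_apply R, totalDegree_sumDiffEquiv]

lemma sum_add_one_sector (e : Fin 2 → Fin 2) :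
    ∑ i, (e i : ℕ) + ∑ i, ((e + 1) i : ℕ) = 2 := by
  revert e; decide

lemma ne_add_one_sector (e : Fin 2 → Fin 2) : e ≠ e + 1 := by
  revert e; decide

lemma eq_or_eq_add_one_of_sum_mod_two_eq {e f : Fin 2 → Fin 2}
    (h : (∑ i, (f i : ℕ)) % 2 = (∑ i, (e i : ℕ)) % 2) : f = e ∨ f = e + 1 := by
  revert e f; decide

end Sectors

section Folding

variable {X E : Type*} [MeasurableSpace X] [NormedAddCommGroup E]
  {μ : Measure X} {e : X ≃ᵐ X} {A H : Set X} {G : X → E}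

lemma preimage_inter_ae_eq_inter_compl (hA : e ⁻¹' A = A) (hH : e ⁻¹' H =ᵐ[μ] Hᶜ) :
    e ⁻¹' (A ∩ H) =ᵐ[μ] (A ∩ Hᶜ : Set X) := by
  rw [preimage_inter, hA]
  exact (ae_eq_refl _).inter hH

lemma integrableOn_inter_iff_of_comp_eq (he : MeasurePreserving e μ μ) (hA : e ⁻¹' A = A)
    (hH : e ⁻¹' H =ᵐ[μ] Hᶜ) (hG : ∀ x, G (e x) = G x) :
    IntegrableOn G (A ∩ H) μ ↔ IntegrableOn G A μ := by
  refine ⟨fun h => ?_, fun h => h.mono_set inter_subset_left⟩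
  have h_compl : IntegrableOn G (A ∩ Hᶜ) μ := by
    rw [← integrableOn_congr_set_ae (preimage_inter_ae_eq_inter_compl hA hH)]
    simpa only [Function.comp_def, hG] using
      (he.integrableOn_comp_preimage (f := G) e.measurableEmbedding).2 h
  simpa only [inter_union_compl] using h.union h_compl

variable [NormedSpace ℝ E]

lemma setIntegral_eq_zero_of_comp_eq_neg (he : MeasurePreserving e μ μ) (hA : e ⁻¹' A = A)
    (hG : ∀ x, G (e x) = -G x) : ∫ x in A, G x ∂μ = 0 := by
  have integral_eq_neg := he.setIntegral_preimage_emb e.measurableEmbedding G A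
  simp only [hA, hG, integral_neg] at integral_eq_neg
  rw [← smul_eq_zero_iff_right (two_ne_zero (α := ℝ)), two_smul]
  exact neg_eq_iff_add_eq_zero.1 integral_eq_neg

lemma setIntegral_eq_two_nsmul_inter_of_comp_eq (he : MeasurePreserving e μ μ)
    (hA : e ⁻¹' A = A) (hH_meas : MeasurableSet H) (hH : e ⁻¹' H =ᵐ[μ] Hᶜ)
    (hG : ∀ x, G (e x) = G x) : ∫ x in A, G x ∂μ = 2 • ∫ x in A ∩ H, G x ∂μ := by
  by_cases hint : IntegrableOn G A μ
  · have h_compl : ∫ x in A ∩ Hᶜ, G x ∂μ = ∫ x in A ∩ H, G x ∂μ := by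
      rw [← he.setIntegral_preimage_emb e.measurableEmbedding G (A ∩ H),
        setIntegral_congr_set (preimage_inter_ae_eq_inter_compl hA hH)]
      simp only [hG]
    rw [← integral_inter_add_sdiff hH_meas hint, sdiff_eq, h_compl, two_nsmul]
  · rw [integral_undef hint,
      integral_undef ((integrableOn_inter_iff_of_comp_eq he hA hH hG).not.2 hint), smul_zero]

end Folding

section QuadraticMap

lemma ae_linearMap_apply_ne_zero {E : Type*} [NormedAddCommGroup E] [NormedSpace ℝ E]
    [MeasurableSpace E] [BorelSpace E] [FiniteDimensional ℝ E] (μ : Measure E)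
    [μ.IsAddHaarMeasure] {f : E →ₗ[ℝ] ℝ} (hf : f ≠ 0) : ∀ᵐ x ∂μ, f x ≠ 0 := by
  rw [ae_iff]
  simp only [not_not]
  exact Measure.addHaar_submodule μ (LinearMap.ker f) (mt LinearMap.ker_eq_top.1 hf)

lemma ae_sq_ne_sq : ∀ᵐ q : ℝ × ℝ, q.1 ^ 2 ≠ q.2 ^ 2 := by
  have ae_ne {f : ℝ × ℝ →ₗ[ℝ] ℝ} (hf : f (1, 0) ≠ 0) : ∀ᵐ q : ℝ × ℝ, f q ≠ 0 :=
    ae_linearMap_apply_ne_zero volume fun h => hf (by rw [h, LinearMap.zero_apply])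
  filter_upwards [ae_ne (f := .fst ℝ ℝ ℝ - .snd ℝ ℝ ℝ) (by simp),
    ae_ne (f := .fst ℝ ℝ ℝ + .snd ℝ ℝ ℝ) (by simp)] with q hsub hadd heq
  rcases sq_eq_sq_iff_eq_or_eq_neg.1 heq with h | h
  · exact hsub (sub_eq_zero.2 h)
  · exact hadd (add_eq_zero_iff_eq_neg.2 h)

/-- The reflection `(x, y) ↦ (-y, -x)`. -/
def negSwap : ℝ × ℝ ≃ᵐ ℝ × ℝ := MeasurableEquiv.prodComm.trans (MeasurableEquiv.neg (ℝ × ℝ))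

lemma negSwap_apply (q : ℝ × ℝ) : negSwap q = (-q.2, -q.1) := rfl

lemma measurePreserving_prodComm :
    MeasurePreserving (MeasurableEquiv.prodComm : ℝ × ℝ ≃ᵐ ℝ × ℝ) :=
  Measure.measurePreserving_swap (μ := (volume : Measure ℝ)) (ν := (volume : Measure ℝ))

lemma measurePreserving_negSwap : MeasurePreserving negSwap :=
  (Measure.measurePreserving_neg (volume : Measure (ℝ × ℝ))).comp measurePreserving_prodComm

lemma prodComm_preimage_sqDom :
    (MeasurableEquiv.prodComm : ℝ × ℝ ≃ᵐ ℝ × ℝ) ⁻¹' sqDom = sqDom := by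
  ext q
  exact and_comm

lemma negSwap_preimage_sqDom : negSwap ⁻¹' sqDom = sqDom := by
  ext q
  simp only [sqDom, mem_preimage, negSwap_apply, mem_prod, mem_Icc]
  constructor <;> rintro ⟨⟨_, _⟩, _, _⟩ <;> refine ⟨⟨?_, ?_⟩, ?_, ?_⟩ <;> linarith

/-- The quadratic map `(x, y) ↦ (2xy, x² + y² - 1)` from the square onto `Ω`, which is four-to-one
almost everywhere. -/
def quadMap (q : ℝ × ℝ) : ℝ × ℝ := (2 * q.1 * q.2, q.1 ^ 2 + q.2 ^ 2 - 1)

lemma quadMap_swap (q : ℝ × ℝ) : quadMap (q.2, q.1) = quadMap q := by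
  ext <;> simp only [quadMap] <;> ring

lemma quadMap_negSwap (q : ℝ × ℝ) : quadMap (negSwap q) = quadMap q := by
  ext <;> simp only [quadMap, negSwap_apply] <;> ring

/-- A fundamental domain in the square for the group generated by the reflections
`(x, y) ↦ (y, x)` and `(x, y) ↦ (-y, -x)`. -/
def sqQuarter : Set (ℝ × ℝ) := {q | q.2 < q.1 ∧ -q.2 < q.1 ∧ q.1 < 1}

lemma measurableSet_sqQuarter : MeasurableSet sqQuarter :=
  (measurableSet_lt measurable_snd measurable_fst).inter
    ((measurableSet_lt measurable_snd.neg measurable_fst).inter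
      (measurableSet_lt measurable_fst measurable_const))

lemma sqDom_inter_ae_eq_sqQuarter :
    (sqDom ∩ {q | q.2 < q.1} ∩ {q | -q.2 < q.1} : Set (ℝ × ℝ)) =ᵐ[volume] sqQuarter := by
  have sqDom_ae_eq : (sqDom : Set (ℝ × ℝ)) =ᵐ[volume] (Ioo (-1) 1 ×ˢ Ioo (-1) 1 : Set (ℝ × ℝ)) :=
    (Measure.set_prod_ae_eq Ioo_ae_eq_Icc Ioo_ae_eq_Icc).symm
  have inter_eq : (Ioo (-1) 1 ×ˢ Ioo (-1) 1 : Set (ℝ × ℝ)) ∩ {q | q.2 < q.1} ∩ {q | -q.2 < q.1} =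
      sqQuarter := by
    ext q
    simp only [sqQuarter, mem_inter_iff, mem_prod, mem_Ioo, mem_ofPred_eq]
    constructor
    · rintro ⟨⟨⟨⟨_, hx⟩, _, _⟩, h⟩, h'⟩
      exact ⟨h, h', hx⟩
    · rintro ⟨_, _, _⟩
      refine ⟨⟨⟨⟨?_, ?_⟩, ?_, ?_⟩, ?_⟩, ?_⟩ <;> linarith
  rw [← inter_eq]
  exact (sqDom_ae_eq.inter (ae_eq_refl _)).inter (ae_eq_refl _)

lemma mem_omegaDom_iff {q : ℝ × ℝ} :
    q ∈ omegaDom ↔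
      0 < 1 - q.1 + q.2 ∧ 0 < 1 + q.1 + q.2 ∧ 0 < q.1 ^ 2 - 4 * q.2 ∧ q.2 < 1 := by
  constructor
  · rintro ⟨x, y, hx, hxy, hy, rfl⟩
    refine ⟨?_, ?_, ?_, ?_⟩ <;> dsimp only <;> nlinarith [sq_pos_of_pos (sub_pos.2 hxy)]
  · rintro ⟨hsub, hadd, hdisc, hv⟩
    have hsqrt := Real.sq_sqrt hdisc.le
    have hsqrt_pos := Real.sqrt_pos.2 hdisc
    have sum_eq : xRoot q + yRoot q = q.1 := by rw [xRoot, yRoot]; ring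
    have mul_eq : xRoot q * yRoot q = q.2 := by rw [xRoot, yRoot]; linarith
    have hlt : xRoot q < yRoot q := by rw [xRoot, yRoot]; linarith
    have mul_sub : (1 - xRoot q) * (1 - yRoot q) = 1 - q.1 + q.2 := by
      rw [← sum_eq, ← mul_eq]; ring
    have mul_add : (1 + xRoot q) * (1 + yRoot q) = 1 + q.1 + q.2 := by
      rw [← sum_eq, ← mul_eq]; ring
    refine ⟨xRoot q, yRoot q, ?_, hlt, ?_, Prod.ext sum_eq.symm mul_eq.symm⟩
    · nlinarith [mul_add, hlt, mul_eq, hv]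
    · nlinarith [mul_sub, hlt, mul_eq, hv]

lemma isOpen_omegaDom : IsOpen omegaDom := by
  have omegaDom_eq : omegaDom = {q | 0 < 1 - q.1 + q.2} ∩ ({q | 0 < 1 + q.1 + q.2} ∩
      ({q | 0 < q.1 ^ 2 - 4 * q.2} ∩ {q | q.2 < 1})) := Set.ext fun _ => mem_omegaDom_iff
  rw [omegaDom_eq]
  exact (isOpen_lt continuous_const (by fun_prop)).inter
    ((isOpen_lt continuous_const (by fun_prop)).inter
      ((isOpen_lt continuous_const (by fun_prop)).inter
        (isOpen_lt continuous_snd continuous_const)))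

lemma quadMap_image_sqQuarter : quadMap '' sqQuarter = omegaDom := by
  ext q
  rw [mem_omegaDom_iff]
  constructor
  · rintro ⟨⟨x, y⟩, ⟨hyx, hnyx, hx⟩, rfl⟩
    dsimp only [quadMap] at hyx hnyx hx ⊢
    have hx2 : 0 < 1 - x ^ 2 := by nlinarith
    have hy2 : 0 < 1 - y ^ 2 := by nlinarith
    refine ⟨?_, ?_, ?_, ?_⟩
    · linarith [sq_pos_of_pos (sub_pos.2 hyx)]
    · linarith [sq_pos_of_pos (neg_lt_iff_pos_add.1 hnyx)]
    · linarith [mul_pos hx2 hy2]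
    · linarith
  · rintro ⟨hsub, hadd, hdisc, hv⟩
    set p := √(1 + q.1 + q.2)
    set r := √(1 - q.1 + q.2)
    have hp : 0 < p := Real.sqrt_pos.2 hadd
    have hr : 0 < r := Real.sqrt_pos.2 hsub
    have hp2 : p ^ 2 = 1 + q.1 + q.2 := Real.sq_sqrt hadd.le
    have hr2 : r ^ 2 = 1 - q.1 + q.2 := Real.sq_sqrt hsub.le
    have mul_lt : p * r < 1 - q.2 := by
      refine lt_of_pow_lt_pow_left₀ 2 (by linarith) ?_
      rw [mul_pow, hp2, hr2]
      linarith
    have add_lt : p + r < 2 := lt_of_pow_lt_pow_left₀ 2 zero_le_two (by linarith)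
    refine ⟨((p + r) / 2, (p - r) / 2), ⟨?_, ?_, ?_⟩, Prod.ext ?_ ?_⟩ <;>
      dsimp only [quadMap] <;> linarith

lemma injOn_quadMap : InjOn quadMap sqQuarter := by
  rintro ⟨x, y⟩ ⟨hyx, hnyx, -⟩ ⟨x', y'⟩ ⟨hyx', hnyx', -⟩ h
  obtain ⟨hu, hv⟩ := Prod.ext_iff.1 h
  dsimp only [quadMap] at hyx hnyx hyx' hnyx' hu hv
  have add_eq : x + y = x' + y' :=
    (pow_left_inj₀ (by linarith) (by linarith) two_ne_zero).1 (by linarith)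
  have sub_eq : x - y = x' - y' :=
    (pow_left_inj₀ (by linarith) (by linarith) two_ne_zero).1 (by linarith)
  exact Prod.ext (by dsimp only; linarith) (by dsimp only; linarith)

/-- The Fréchet derivative of `quadMap`. -/
def quadMapFDeriv (q : ℝ × ℝ) : ℝ × ℝ →L[ℝ] ℝ × ℝ :=
  (Matrix.toLin (.finTwoProd ℝ) (.finTwoProd ℝ)
    !![2 * q.2, 2 * q.1; 2 * q.1, 2 * q.2]).toContinuousLinearMap

lemma hasFDerivAt_quadMap (q : ℝ × ℝ) : HasFDerivAt quadMap (quadMapFDeriv q) q := by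
  rw [quadMapFDeriv, Matrix.toLin_finTwoProd_toContinuousLinearMap]
  have hfst := hasFDerivAt_fst (𝕜 := ℝ) (p := q)
  have hsnd := hasFDerivAt_snd (𝕜 := ℝ) (p := q)
  refine (((hfst.const_mul 2).mul hsnd).prodMk (((hfst.pow 2).add (hsnd.pow 2)).sub_const 1)
    ).congr_fderiv ?_
  ext <;> simp
  ring

lemma abs_det_quadMapFDeriv (q : ℝ × ℝ) :
    |(quadMapFDeriv q).det| = 4 * |q.1 ^ 2 - q.2 ^ 2| := by
  have det_eq : (quadMapFDeriv q).det = -(4 * (q.1 ^ 2 - q.2 ^ 2)) := by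
    rw [quadMapFDeriv, LinearMap.det_toContinuousLinearMap, LinearMap.det_toLin,
      Matrix.det_fin_two_of]
    ring
  rw [det_eq, abs_neg, abs_mul, abs_of_pos zero_lt_four]

lemma prodComm_preimage_ae_eq_compl :
    (MeasurableEquiv.prodComm : ℝ × ℝ ≃ᵐ ℝ × ℝ) ⁻¹' {q | q.2 < q.1} =ᵐ[volume]
      ({q | q.2 < q.1}ᶜ : Set (ℝ × ℝ)) := by
  filter_upwards [ae_sq_ne_sq] with q hq
  have hne : q.1 ≠ q.2 := fun h => hq (by rw [h])
  refine propext (?_ : q.1 < q.2 ↔ ¬ q.2 < q.1)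
  rw [not_lt, hne.le_iff_lt]

lemma negSwap_preimage_ae_eq_compl :
    negSwap ⁻¹' {q | -q.2 < q.1} =ᵐ[volume] ({q | -q.2 < q.1}ᶜ : Set (ℝ × ℝ)) := by
  filter_upwards [ae_sq_ne_sq] with q hq
  have hne : q.1 ≠ -q.2 := fun h => hq (by rw [h, neg_sq])
  refine propext (?_ : - -q.1 < -q.2 ↔ ¬ -q.2 < q.1)
  rw [neg_neg, not_lt, hne.le_iff_lt]

lemma negSwap_preimage_sqDom_inter :
    negSwap ⁻¹' (sqDom ∩ {q | q.2 < q.1}) = sqDom ∩ {q | q.2 < q.1} := by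
  rw [preimage_inter, negSwap_preimage_sqDom]
  congr 1
  ext q
  exact neg_lt_neg_iff (a := q.1) (b := q.2)

/-- The pullback of a weight on `Ω` along the four-to-one map `quadMap`, whose Jacobian is
`4 |x² - y²|`. -/
def quadPullback (W : ℝ × ℝ → ℝ) (q : ℝ × ℝ) : ℝ := W (quadMap q) * |q.1 ^ 2 - q.2 ^ 2|

lemma quadPullback_prodComm (W : ℝ × ℝ → ℝ) (q : ℝ × ℝ) :
    quadPullback W (MeasurableEquiv.prodComm q) = quadPullback W q := by
  change W (quadMap (q.2, q.1)) * |q.2 ^ 2 - q.1 ^ 2| = _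
  rw [quadMap_swap, abs_sub_comm, quadPullback]

lemma quadPullback_negSwap (W : ℝ × ℝ → ℝ) (q : ℝ × ℝ) :
    quadPullback W (negSwap q) = quadPullback W q := by
  rw [quadPullback, quadMap_negSwap, negSwap_apply, neg_sq, neg_sq, abs_sub_comm, quadPullback]

lemma abs_det_smul_eq_quadPullback (W : ℝ × ℝ → ℝ) (q : ℝ × ℝ) :
    |(quadMapFDeriv q).det| • W (quadMap q) = 4 * quadPullback W q := by
  rw [abs_det_quadMapFDeriv, quadPullback, smul_eq_mul]
  ring

lemma integrableOn_quadPullback_iff {W : ℝ × ℝ → ℝ} :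
    IntegrableOn (quadPullback W) sqDom ↔ IntegrableOn W omegaDom := by
  rw [← integrableOn_inter_iff_of_comp_eq measurePreserving_prodComm prodComm_preimage_sqDom
      prodComm_preimage_ae_eq_compl (quadPullback_prodComm W),
    ← integrableOn_inter_iff_of_comp_eq measurePreserving_negSwap negSwap_preimage_sqDom_inter
      negSwap_preimage_ae_eq_compl (quadPullback_negSwap W),
    integrableOn_congr_set_ae sqDom_inter_ae_eq_sqQuarter, ← quadMap_image_sqQuarter,
    integrableOn_image_iff_integrableOn_abs_det_fderiv_smul volume measurableSet_sqQuarter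
      (fun q _ => (hasFDerivAt_quadMap q).hasFDerivWithinAt) injOn_quadMap]
  simp only [abs_det_smul_eq_quadPullback]
  exact (integrable_const_mul_iff (IsUnit.mk0 (4 : ℝ) four_ne_zero) _).symm

lemma setIntegral_quadPullback (W : ℝ × ℝ → ℝ) :
    ∫ q in sqDom, quadPullback W q = ∫ q in omegaDom, W q := by
  have hH : MeasurableSet {q : ℝ × ℝ | -q.2 < q.1} :=
    measurableSet_lt measurable_snd.neg measurable_fst
  rw [setIntegral_eq_two_nsmul_inter_of_comp_eq measurePreserving_prodComm prodComm_preimage_sqDom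
      (measurableSet_lt measurable_snd measurable_fst) prodComm_preimage_ae_eq_compl
      (quadPullback_prodComm W),
    setIntegral_eq_two_nsmul_inter_of_comp_eq measurePreserving_negSwap
      negSwap_preimage_sqDom_inter hH
      negSwap_preimage_ae_eq_compl (quadPullback_negSwap W),
    setIntegral_congr_set sqDom_inter_ae_eq_sqQuarter, ← quadMap_image_sqQuarter,
    integral_image_eq_integral_abs_det_fderiv_smul volume measurableSet_sqQuarter
      (fun q _ => (hasFDerivAt_quadMap q).hasFDerivWithinAt) injOn_quadMap]
  simp only [abs_det_smul_eq_quadPullback, integral_const_mul]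
  ring

end QuadraticMap

section PolynomialInner

variable {D : Set (ℝ × ℝ)} {W W' : ℝ × ℝ → ℝ} {n : ℕ}

lemma continuous_evalP (P : MvPolynomial (Fin 2) ℝ) : Continuous (evalP P) :=
  (MvPolynomial.continuous_eval P).comp <|
    continuous_pi <| Fin.forall_fin_two.2 ⟨continuous_fst, continuous_snd⟩

lemma evalP_mul (P Q : MvPolynomial (Fin 2) ℝ) (q : ℝ × ℝ) :
    evalP (P * Q) q = evalP P q * evalP Q q := map_mul _ _ _

lemma evalP_sum {ι : Type*} (s : Finset ι) (P : ι → MvPolynomial (Fin 2) ℝ) (q : ℝ × ℝ) :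
    evalP (∑ i ∈ s, P i) q = ∑ i ∈ s, evalP (P i) q := map_sum _ _ _

lemma eq_zero_of_evalP_eq_zero (hD : IsOpen D) (hne : D.Nonempty)
    {P : MvPolynomial (Fin 2) ℝ} (hP : ∀ q ∈ D, evalP P q = 0) : P = 0 := by
  obtain ⟨⟨a, b⟩, hab⟩ := hne
  obtain ⟨u, v, hu, hv, ha, hb, huv⟩ := isOpen_prod_iff.1 hD a b hab
  have infinite_prod (i : Fin 2) : (![u, v] i).Infinite := by
    fin_cases i
    · exact infinite_of_mem_nhds a (hu.mem_nhds ha)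
    · exact infinite_of_mem_nhds b (hv.mem_nhds hb)
  refine MvPolynomial.funext_set ![u, v] infinite_prod fun x hx => ?_
  have hx_eq : x = ![x 0, x 1] := by
    ext i
    fin_cases i <;> rfl
  have hx_mem : (x 0, x 1) ∈ u ×ˢ v := ⟨hx 0 (mem_univ 0), hx 1 (mem_univ 1)⟩
  have evalP_eq := hP _ (huv hx_mem)
  rwa [evalP, ← hx_eq] at evalP_eq

/-- The bilinear form `(P, Q) ↦ ∫_D P Q W` on polynomials. -/
def polyInner (D : Set (ℝ × ℝ)) (W : ℝ × ℝ → ℝ) (P Q : MvPolynomial (Fin 2) ℝ) : ℝ :=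
  ∫ q in D, evalP P q * evalP Q q * W q

lemma polyInner_comm (P Q : MvPolynomial (Fin 2) ℝ) : polyInner D W P Q = polyInner D W Q P := by
  simp only [polyInner, mul_comm (evalP P _)]

lemma polyInner_zero_left (Q : MvPolynomial (Fin 2) ℝ) : polyInner D W 0 Q = 0 := by
  simp [polyInner, evalP]

lemma polyInner_smul_smul (c d : ℝ) (P Q : MvPolynomial (Fin 2) ℝ) :
    polyInner D W (c • P) (d • Q) = c * d * polyInner D W P Q := by
  simp only [polyInner, evalP, smul_eval, ← integral_const_mul]
  congr! 2
  ring

lemma polyInner_const_mul_weight (c : ℝ) (P Q : MvPolynomial (Fin 2) ℝ) :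
    polyInner D (fun q => c * W q) P Q = c * polyInner D W P Q := by
  simp only [polyInner, ← integral_const_mul]
  congr! 2
  ring

lemma polyInner_congr_ae (h : W =ᵐ[volume.restrict D] W') :
    polyInner D W = polyInner D W' := by
  ext P Q
  exact integral_congr_ae (h.mono fun q hq => by dsimp only; rw [hq])

lemma integrableOn_evalP_mul_evalP_mul (hD : MeasurableSet D) (hbdd : Bornology.IsBounded D)
    (hW : IntegrableOn W D) (P Q : MvPolynomial (Fin 2) ℝ) :
    IntegrableOn (fun q => evalP P q * evalP Q q * W q) D :=
  hW.continuousOn_mul_of_subset ((continuous_evalP P).mul (continuous_evalP Q)).continuousOn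
    hbdd.isCompact_closure hD subset_closure

lemma polyInner_sum_left (hD : MeasurableSet D) (hbdd : Bornology.IsBounded D)
    (hW : IntegrableOn W D) {ι : Type*} (s : Finset ι) (P : ι → MvPolynomial (Fin 2) ℝ)
    (Q : MvPolynomial (Fin 2) ℝ) :
    polyInner D W (∑ i ∈ s, P i) Q = ∑ i ∈ s, polyInner D W (P i) Q := by
  simp only [polyInner, evalP_sum, Finset.sum_mul]
  exact integral_finsetSum s fun i _ => integrableOn_evalP_mul_evalP_mul hD hbdd hW (P i) Q

lemma eq_zero_of_polyInner_self_eq_zero (hD : IsOpen D) (hne : D.Nonempty)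
    (hbdd : Bornology.IsBounded D) (hW : IntegrableOn W D) (hpos : ∀ q ∈ D, 0 < W q)
    {P : MvPolynomial (Fin 2) ℝ} (hP : polyInner D W P P = 0) : P = 0 := by
  have ae_mem : ∀ᵐ q ∂volume.restrict D, q ∈ D := ae_restrict_mem hD.measurableSet
  have sq_mul_ae_eq := (setIntegral_eq_zero_iff_of_nonneg_ae
    (ae_mem.mono fun q hq => mul_nonneg (mul_self_nonneg _) (hpos q hq).le)
    (integrableOn_evalP_mul_evalP_mul hD.measurableSet hbdd hW P P)).1 hP
  have evalP_ae_eq : evalP P =ᵐ[volume.restrict D] 0 := by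
    filter_upwards [sq_mul_ae_eq, ae_mem] with q hq hmem
    exact mul_self_eq_zero.1 ((mul_eq_zero.1 hq).resolve_right (hpos q hmem).ne')
  exact eq_zero_of_evalP_eq_zero hD hne <| Measure.eqOn_open_of_ae_eq evalP_ae_eq hD
    (continuous_evalP P).continuousOn continuousOn_const

lemma mem_Vpoly_iff {P : MvPolynomial (Fin 2) ℝ} :
    P ∈ Vpoly D W n ↔ P.totalDegree = n ∧
      ∀ Q : MvPolynomial (Fin 2) ℝ, Q.totalDegree < n → polyInner D W P Q = 0 := Iff.rfl

lemma isONBVn_iff {Q : ℕ → MvPolynomial (Fin 2) ℝ} :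
    isONBVn D W n Q ↔ (∀ k ≤ n, Q k ∈ Vpoly D W n) ∧
      (∀ k ≤ n, ∀ j ≤ n, polyInner D W (Q k) (Q j) = if k = j then 1 else 0) ∧
      ∀ R ∈ Vpoly D W n, R ∈ Submodule.span ℝ (Q '' Iic n) := Iff.rfl

lemma isONBVn_congr_ae (h : W =ᵐ[volume.restrict D] W') {Q : ℕ → MvPolynomial (Fin 2) ℝ} :
    isONBVn D W n Q ↔ isONBVn D W' n Q := by
  simp only [isONBVn_iff, mem_Vpoly_iff, polyInner_congr_ae h]

lemma ne_zero_of_polyInner_self_eq_one {P : MvPolynomial (Fin 2) ℝ}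
    (hP : polyInner D W P P = 1) : P ≠ 0 := by
  rintro rfl
  exact zero_ne_one ((polyInner_zero_left 0).symm.trans hP)

lemma totalDegree_smul_of_ne_zero {c : ℝ} (hc : c ≠ 0) (P : MvPolynomial (Fin 2) ℝ) :
    (c • P).totalDegree = P.totalDegree := by
  refine (totalDegree_smul_le c P).antisymm ?_
  simpa only [inv_smul_smul₀ hc] using totalDegree_smul_le c⁻¹ (c • P)

open scoped Pointwise in
lemma isONBVn_sqrt_smul {c : ℝ} (hc : 0 < c) {Q : ℕ → MvPolynomial (Fin 2) ℝ}
    (hQ : isONBVn D (fun q => c * W q) n Q) : isONBVn D W n (fun k => √c • Q k) := by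
  have hsqrt : √c ≠ 0 := (Real.sqrt_pos.2 hc).ne'
  have polyInner_eq (P R : MvPolynomial (Fin 2) ℝ) :
      polyInner D W (√c • P) (√c • R) = polyInner D (fun q => c * W q) P R := by
    rw [polyInner_smul_smul, Real.mul_self_sqrt hc.le, polyInner_const_mul_weight]
  have orth_iff (P R : MvPolynomial (Fin 2) ℝ) :
      polyInner D (fun q => c * W q) P R = 0 ↔ polyInner D W P R = 0 := by
    rw [polyInner_const_mul_weight, mul_eq_zero_iff_left hc.ne']
  obtain ⟨hmem, horth, hspan⟩ := isONBVn_iff.1 hQ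
  refine isONBVn_iff.2 ⟨fun k hk => ?_, fun k hk j hj => ?_, fun R hR => ?_⟩
  · obtain ⟨hdeg, hlow⟩ := hmem k hk
    refine mem_Vpoly_iff.2 ⟨(totalDegree_smul_of_ne_zero hsqrt _).trans hdeg, fun R hR => ?_⟩
    rw [← one_smul ℝ R, polyInner_smul_smul, (orth_iff _ _).1 (hlow R hR), mul_zero]
  · rw [polyInner_eq, horth k hk j hj]
  · have image_eq : (fun k => √c • Q k) '' Iic n = √c • Q '' Iic n := by
      rw [← image_smul, image_image]
    rw [image_eq, Submodule.span_smul_eq_of_isUnit _ _ (IsUnit.mk0 _ hsqrt)]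
    exact hspan R ⟨hR.1, fun S hS => (orth_iff R S).2 (hR.2 S hS)⟩

lemma isONBVn_append {L N : ℕ} (hN : N = n + L) {A B : ℕ → MvPolynomial (Fin 2) ℝ}
    (hA : ∀ k ≤ n, A k ∈ Vpoly D W N) (hB : ∀ k < L, B k ∈ Vpoly D W N)
    (hAA : ∀ k ≤ n, ∀ j ≤ n, polyInner D W (A k) (A j) = if k = j then 1 else 0)
    (hBB : ∀ k < L, ∀ j < L, polyInner D W (B k) (B j) = if k = j then 1 else 0)
    (hAB : ∀ k ≤ n, ∀ j < L, polyInner D W (A k) (B j) = 0)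
    (hspan : ∀ R ∈ Vpoly D W N,
      R ∈ Submodule.span ℝ (A '' Iic n) ⊔ Submodule.span ℝ (B '' Iio L)) :
    isONBVn D W N (fun k => if k ≤ n then A k else B (k - n - 1)) := by
  refine isONBVn_iff.2 ⟨fun k hk => ?_, fun k hk j hj => ?_, fun R hR => ?_⟩
  · split_ifs with h
    · exact hA k h
    · exact hB _ (by omega)
  · split_ifs with hkn hjn hkj hjn hkj hkj <;> try omega
    · rw [hAA k hkn j hjn, if_pos hkj]
    · rw [hAA k hkn j hjn, if_neg hkj]
    · exact hAB k hkn _ (by omega)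
    · rw [polyInner_comm, hAB j (by omega) _ (by omega)]
    · rw [hBB _ (by omega) _ (by omega), if_pos (by omega)]
    · rw [hBB _ (by omega) _ (by omega), if_neg (by omega)]
  · refine (sup_le (Submodule.span_mono ?_) (Submodule.span_mono ?_) : _ ≤ Submodule.span ℝ _)
      (hspan R hR)
    · rintro _ ⟨k, hk, rfl⟩
      exact ⟨k, (mem_Iic.1 hk).trans (by omega), if_pos hk⟩
    · rintro _ ⟨k, hk, rfl⟩
      have hkL := mem_Iio.1 hk
      have index_eq : k + n + 1 - n - 1 = k := by omega
      refine ⟨k + n + 1, mem_Iic.2 (by omega), ?_⟩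
      simp only [if_neg (show ¬ k + n + 1 ≤ n by omega), index_eq]

end PolynomialInner

section SectorOrthogonality

variable {W : ℝ × ℝ → ℝ} {e f : Fin 2 → Fin 2} {n N : ℕ}

lemma evalP_quadSub (P : MvPolynomial (Fin 2) ℝ) (q : ℝ × ℝ) :
    evalP (quadSub P) q = evalP P (quadMap q) := by
  have comp_eq : (aeval ![q.1, q.2]).comp
      (aeval ![2 * X 0 * X 1, X 0 ^ 2 + X 1 ^ 2 - 1] : _ →ₐ[ℝ] MvPolynomial (Fin 2) ℝ) =
        aeval ![(quadMap q).1, (quadMap q).2] := by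
    ext i
    fin_cases i <;> simp [quadMap]
  simpa [evalP, quadSub] using DFunLike.congr_fun comp_eq P

lemma evalP_sectorLift (e : Fin 2 → Fin 2) (P : MvPolynomial (Fin 2) ℝ) (q : ℝ × ℝ) :
    evalP (sectorLift e P) q =
      (q.1 + q.2) ^ (e 0 : ℕ) * (q.1 - q.2) ^ (e 1 : ℕ) * evalP P (quadMap q) := by
  rw [sectorLift_apply, evalP_mul, evalP_quadSub, sectorGen_eq]
  simp [evalP]

lemma evalP_sectorLift_prodComm (e : Fin 2 → Fin 2) (P : MvPolynomial (Fin 2) ℝ) (q : ℝ × ℝ) :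
    evalP (sectorLift e P) (MeasurableEquiv.prodComm q) =
      (-1) ^ (e 1 : ℕ) * evalP (sectorLift e P) q := by
  change evalP (sectorLift e P) (q.2, q.1) = _
  simp only [evalP_sectorLift, quadMap_swap]
  rw [← neg_sub q.1 q.2, neg_pow, add_comm q.2]
  ring

lemma evalP_sectorLift_negSwap (e : Fin 2 → Fin 2) (P : MvPolynomial (Fin 2) ℝ) (q : ℝ × ℝ) :
    evalP (sectorLift e P) (negSwap q) = (-1) ^ (e 0 : ℕ) * evalP (sectorLift e P) q := by
  rw [evalP_sectorLift, evalP_sectorLift, quadMap_negSwap, negSwap_apply]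
  dsimp only
  rw [← neg_add_rev, neg_pow, neg_sub_neg]
  ring

lemma neg_one_pow_mul_neg_one_pow_of_ne {a b : Fin 2} (h : a ≠ b) :
    (-1 : ℝ) ^ (a : ℕ) * (-1) ^ (b : ℕ) = -1 := by
  fin_cases a <;> fin_cases b <;> simp at h ⊢

lemma polyInner_sectorLift_of_ne (W : ℝ × ℝ → ℝ) (h : e ≠ f) (P R : MvPolynomial (Fin 2) ℝ) :
    polyInner sqDom (quadPullback W) (sectorLift e P) (sectorLift f R) = 0 := by
  have h_or : e 0 ≠ f 0 ∨ e 1 ≠ f 1 := by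
    simpa only [Function.ne_iff, Fin.exists_fin_two] using h
  rcases h_or with h | h <;> have sign := neg_one_pow_mul_neg_one_pow_of_ne h
  · refine setIntegral_eq_zero_of_comp_eq_neg measurePreserving_negSwap
      negSwap_preimage_sqDom fun q => ?_
    simp only [evalP_sectorLift_negSwap, quadPullback_negSwap]
    linear_combination
      (evalP (sectorLift e P) q * evalP (sectorLift f R) q * quadPullback W q) * sign
  · refine setIntegral_eq_zero_of_comp_eq_neg measurePreserving_prodComm
      prodComm_preimage_sqDom fun q => ?_
    simp only [evalP_sectorLift_prodComm, quadPullback_prodComm]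
    linear_combination
      (evalP (sectorLift e P) q * evalP (sectorLift f R) q * quadPullback W q) * sign

/-- The weight on `Ω` induced by the sector `e`: on composing with `quadMap`, its polynomial
factor becomes the square of `sectorGen e`. -/
def sectorWeight (W : ℝ × ℝ → ℝ) (e : Fin 2 → Fin 2) (q : ℝ × ℝ) : ℝ :=
  (1 + q.1 + q.2) ^ (e 0 : ℕ) * (1 - q.1 + q.2) ^ (e 1 : ℕ) * W q

lemma polyInner_sectorLift_self (W : ℝ × ℝ → ℝ) (e : Fin 2 → Fin 2)
    (P R : MvPolynomial (Fin 2) ℝ) :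
    polyInner sqDom (quadPullback W) (sectorLift e P) (sectorLift e R) =
      polyInner omegaDom (sectorWeight W e) P R := by
  rw [polyInner, polyInner, ← setIntegral_quadPullback]
  congr! 2 with q
  have add_sq : 1 + (quadMap q).1 + (quadMap q).2 = (q.1 + q.2) ^ 2 := by
    rw [quadMap]; ring
  have sub_sq : 1 - (quadMap q).1 + (quadMap q).2 = (q.1 - q.2) ^ 2 := by
    rw [quadMap]; ring
  simp only [evalP_sectorLift, quadPullback, sectorWeight, add_sq, sub_sq, ← pow_mul]
  ring

lemma measurableSet_sqDom : MeasurableSet sqDom := measurableSet_Icc.prod measurableSet_Icc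

lemma isBounded_sqDom : Bornology.IsBounded sqDom :=
  (Metric.isBounded_Icc (-1 : ℝ) 1).prod (Metric.isBounded_Icc (-1 : ℝ) 1)

lemma polyInner_sum_sectorLift (hW : IntegrableOn W omegaDom)
    (r : (Fin 2 → Fin 2) → MvPolynomial (Fin 2) ℝ) (e : Fin 2 → Fin 2)
    (S : MvPolynomial (Fin 2) ℝ) :
    polyInner sqDom (quadPullback W) (∑ f, sectorLift f (r f)) (sectorLift e S) =
      polyInner omegaDom (sectorWeight W e) (r e) S := by
  rw [polyInner_sum_left measurableSet_sqDom isBounded_sqDom (integrableOn_quadPullback_iff.2 hW),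
    Finset.sum_eq_single e (fun f _ hf => polyInner_sectorLift_of_ne W hf _ _)
      fun he => (he (Finset.mem_univ e)).elim, polyInner_sectorLift_self]

lemma nonempty_omegaDom : omegaDom.Nonempty :=
  ⟨_, -2⁻¹, 2⁻¹, by norm_num, by norm_num, by norm_num, rfl⟩

lemma isBounded_omegaDom : Bornology.IsBounded omegaDom := by
  refine ((Metric.isBounded_Icc (-2 : ℝ) 2).prod (Metric.isBounded_Icc (-1 : ℝ) 1)).subset
    fun q hq => ?_
  obtain ⟨hsub, hadd, -, hv⟩ := mem_omegaDom_iff.1 hq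
  exact ⟨⟨by linarith, by linarith⟩, by linarith, by linarith⟩

lemma integrableOn_sectorWeight (hW : IntegrableOn W omegaDom) (e : Fin 2 → Fin 2) :
    IntegrableOn (sectorWeight W e) omegaDom :=
  hW.continuousOn_mul_of_subset (by fun_prop) isBounded_omegaDom.isCompact_closure
    isOpen_omegaDom.measurableSet subset_closure

lemma sectorWeight_pos (hpos : ∀ q ∈ omegaDom, 0 < W q) (e : Fin 2 → Fin 2) :
    ∀ q ∈ omegaDom, 0 < sectorWeight W e q := by
  intro q hq
  obtain ⟨hsub, hadd, -⟩ := mem_omegaDom_iff.1 hq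
  exact mul_pos (mul_pos (pow_pos hadd _) (pow_pos hsub _)) (hpos q hq)

lemma sectorLift_mem_Vpoly (hW : IntegrableOn W omegaDom) {P : MvPolynomial (Fin 2) ℝ}
    (hP_ne : P ≠ 0) (hP : P ∈ Vpoly omegaDom (sectorWeight W e) n) :
    sectorLift e P ∈ Vpoly sqDom (quadPullback W) (2 * n + ∑ i, (e i : ℕ)) := by
  obtain ⟨hdeg, horth⟩ := mem_Vpoly_iff.1 hP
  refine mem_Vpoly_iff.2 ⟨by rw [totalDegree_sectorLift e hP_ne, hdeg], fun R hR => ?_⟩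
  obtain ⟨r, rfl, hr⟩ := exists_eq_sum_sectorLift R
  rw [polyInner_comm, polyInner_sum_sectorLift hW]
  by_cases hre : r e = 0
  · rw [hre, polyInner_zero_left]
  · rw [polyInner_comm]
    exact horth (r e) (by linarith [hr e hre])

lemma exists_eq_sum_sectorLift_of_mem_Vpoly (hW : IntegrableOn W omegaDom)
    (hpos : ∀ q ∈ omegaDom, 0 < W q) {R : MvPolynomial (Fin 2) ℝ}
    (hR : R ∈ Vpoly sqDom (quadPullback W) N) :
    ∃ r : (Fin 2 → Fin 2) → MvPolynomial (Fin 2) ℝ, R = ∑ e, sectorLift e (r e) ∧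
      ∀ e, r e ≠ 0 → 2 * (r e).totalDegree + ∑ i, (e i : ℕ) = N ∧
        r e ∈ Vpoly omegaDom (sectorWeight W e) (r e).totalDegree := by
  obtain ⟨hdeg, horth⟩ := mem_Vpoly_iff.1 hR
  obtain ⟨r, rfl, hr⟩ := exists_eq_sum_sectorLift R
  have orth (e) {S : MvPolynomial (Fin 2) ℝ} (hS : 2 * S.totalDegree + ∑ i, (e i : ℕ) < N) :
      polyInner omegaDom (sectorWeight W e) (r e) S = 0 := by
    rcases eq_or_ne S 0 with rfl | hS_ne
    · rw [polyInner_comm, polyInner_zero_left]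
    · rw [← polyInner_sum_sectorLift hW]
      exact horth _ ((totalDegree_sectorLift e hS_ne).trans_lt hS)
  refine ⟨r, rfl, fun e he => ?_⟩
  have degree_eq : 2 * (r e).totalDegree + ∑ i, (e i : ℕ) = N := by
    refine ((hr e he).trans_eq hdeg).eq_of_not_lt fun hlt => he ?_
    exact eq_zero_of_polyInner_self_eq_zero isOpen_omegaDom nonempty_omegaDom isBounded_omegaDom
      (integrableOn_sectorWeight hW e) (sectorWeight_pos hpos e) (orth e hlt)
  exact ⟨degree_eq, mem_Vpoly_iff.2 ⟨rfl, fun S hS => orth e (by omega)⟩⟩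

lemma mem_span_sup_of_mem_Vpoly_quadPullback (hW : IntegrableOn W omegaDom)
    (hpos : ∀ q ∈ omegaDom, 0 < W q) {s t : Set (MvPolynomial (Fin 2) ℝ)}
    (hs : ∀ P ∈ Vpoly omegaDom (sectorWeight W e) n, P ∈ Submodule.span ℝ s)
    (ht : ∀ m, m + 1 = n + ∑ i, (e i : ℕ) →
      ∀ P ∈ Vpoly omegaDom (sectorWeight W (e + 1)) m, P ∈ Submodule.span ℝ t)
    {R : MvPolynomial (Fin 2) ℝ}
    (hR : R ∈ Vpoly sqDom (quadPullback W) (2 * n + ∑ i, (e i : ℕ))) :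
    R ∈ Submodule.span ℝ (sectorLift e '' s) ⊔ Submodule.span ℝ (sectorLift (e + 1) '' t) := by
  have sum_succ := sum_add_one_sector e
  obtain ⟨r, rfl, hr⟩ := exists_eq_sum_sectorLift_of_mem_Vpoly hW hpos hR
  refine Submodule.sum_mem _ fun f _ => ?_
  rcases eq_or_ne (r f) 0 with hrf | hrf
  · rw [hrf, map_zero]
    exact zero_mem _
  obtain ⟨hdeg, hmem⟩ := hr f hrf
  rcases eq_or_eq_add_one_of_sum_mod_two_eq (e := e) (f := f) (by omega) with rfl | rfl
  · rw [show (r f).totalDegree = n by omega] at hmem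
    exact Submodule.mem_sup_left (Submodule.apply_mem_span_image_of_mem_span _ (hs _ hmem))
  · exact Submodule.mem_sup_right
      (Submodule.apply_mem_span_image_of_mem_span _ (ht _ (by omega) _ hmem))

lemma isONBVn_sectorLift (hW : IntegrableOn W omegaDom) (hpos : ∀ q ∈ omegaDom, 0 < W q)
    {P Q : ℕ → MvPolynomial (Fin 2) ℝ} (hP : isONBVn omegaDom (sectorWeight W e) n P)
    (hQ : ∀ m, m + 1 = n + ∑ i, (e i : ℕ) → isONBVn omegaDom (sectorWeight W (e + 1)) m Q) :
    isONBVn sqDom (quadPullback W) (2 * n + ∑ i, (e i : ℕ)) fun k =>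
      if k ≤ n then sectorLift e (P k) else sectorLift (e + 1) (Q (k - n - 1)) := by
  obtain ⟨hP_mem, hP_orth, hP_span⟩ := isONBVn_iff.1 hP
  have sum_succ := sum_add_one_sector e
  refine isONBVn_append (L := n + ∑ i, (e i : ℕ)) (A := fun k => sectorLift e (P k))
    (B := fun k => sectorLift (e + 1) (Q k)) (by ring) (fun k hk => ?_) (fun k hk => ?_)
    (fun k hk j hj => ?_) (fun k hk j hj => ?_) (fun k _ j _ => ?_) (fun R hR => ?_)
  · have hP_ne := ne_zero_of_polyInner_self_eq_one ((hP_orth k hk k hk).trans (if_pos rfl))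
    exact sectorLift_mem_Vpoly hW hP_ne (hP_mem k hk)
  · obtain ⟨m, hm⟩ := Nat.exists_eq_add_one.2 (Nat.zero_lt_of_lt hk)
    obtain ⟨hQ_mem, hQ_orth, -⟩ := isONBVn_iff.1 (hQ m hm.symm)
    have hkm : k ≤ m := by omega
    have hQ_ne := ne_zero_of_polyInner_self_eq_one ((hQ_orth k hkm k hkm).trans (if_pos rfl))
    rw [show 2 * n + ∑ i, (e i : ℕ) = 2 * m + ∑ i, ((e + 1) i : ℕ) by omega]
    exact sectorLift_mem_Vpoly hW hQ_ne (hQ_mem k hkm)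
  · rw [polyInner_sectorLift_self, hP_orth k hk j hj]
  · obtain ⟨m, hm⟩ := Nat.exists_eq_add_one.2 (Nat.zero_lt_of_lt hk)
    rw [polyInner_sectorLift_self,
      (isONBVn_iff.1 (hQ m hm.symm)).2.1 k (by omega) j (by omega)]
  · exact polyInner_sectorLift_of_ne W (ne_add_one_sector e) _ _
  · have mem_span := mem_span_sup_of_mem_Vpoly_quadPullback hW hpos hP_span
      (t := Q '' Iio (n + ∑ i, (e i : ℕ))) (fun m hm => ?_) hR
    · simpa only [image_image] using mem_span
    · rw [← hm, Iio_add_one_eq_Iic]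
      exact (isONBVn_iff.1 (hQ m hm)).2.2

end SectorOrthogonality

section KoornwinderWeight

variable {a b c α β γ : ℝ} {e : Fin 2 → Fin 2} {n : ℕ}

/-- Koornwinder's weight `2 a (1 - u + v)^α (1 + u + v)^β (u² - 4v)^γ` on `Ω`. -/
def koornwinderWeight (a α β γ : ℝ) (q : ℝ × ℝ) : ℝ :=
  2 * a * (1 - q.1 + q.2) ^ α * (1 + q.1 + q.2) ^ β * (q.1 ^ 2 - 4 * q.2) ^ γ

/-- The weight on the square corresponding to `koornwinderWeight`. -/
def squareWeight (a α β γ : ℝ) (q : ℝ × ℝ) : ℝ :=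
  2 * a * (4 : ℝ) ^ γ * |q.1 - q.2| ^ (2 * α + 1) * |q.1 + q.2| ^ (2 * β + 1)
    * (1 - q.1 ^ 2) ^ γ * (1 - q.2 ^ 2) ^ γ

lemma koornwinderWeight_pos (ha : 0 < a) {q : ℝ × ℝ} (hq : q ∈ omegaDom) :
    0 < koornwinderWeight a α β γ q := by
  obtain ⟨hsub, hadd, hdisc, -⟩ := mem_omegaDom_iff.1 hq
  unfold koornwinderWeight
  positivity

lemma koornwinderWeight_add_sector (ha : a ≠ 0) {q : ℝ × ℝ} (hq : q ∈ omegaDom) :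
    koornwinderWeight b (α + (e 1 : ℕ)) (β + (e 0 : ℕ)) γ q =
      b / a * sectorWeight (koornwinderWeight a α β γ) e q := by
  obtain ⟨hsub, hadd, -⟩ := mem_omegaDom_iff.1 hq
  rw [sectorWeight, koornwinderWeight, koornwinderWeight, Real.rpow_add_natCast hsub.ne',
    Real.rpow_add_natCast hadd.ne']
  field_simp

lemma isONBVn_sectorWeight_koornwinderWeight (ha : 0 < a) (hb : 0 < b)
    {P : ℕ → MvPolynomial (Fin 2) ℝ}
    (hP : isONBVn omegaDom (koornwinderWeight b (α + (e 1 : ℕ)) (β + (e 0 : ℕ)) γ) n P) :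
    isONBVn omegaDom (sectorWeight (koornwinderWeight a α β γ) e) n fun k => √(b / a) • P k := by
  refine isONBVn_sqrt_smul (div_pos hb ha) ((isONBVn_congr_ae ?_).1 hP)
  exact (ae_restrict_mem isOpen_omegaDom.measurableSet).mono
    fun q hq => koornwinderWeight_add_sector ha.ne' hq

lemma squareWeight_eq_quadPullback {q : ℝ × ℝ} (hq : q ∈ sqDom) (hne : q.1 ^ 2 ≠ q.2 ^ 2) :
    squareWeight a α β γ q = quadPullback (koornwinderWeight a α β γ) q := by
  obtain ⟨⟨hx, hx'⟩, hy, hy'⟩ := hq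
  have hsub : |q.1 - q.2| ≠ 0 := abs_ne_zero.2 fun h => hne (by rw [sub_eq_zero.1 h])
  have hadd : |q.1 + q.2| ≠ 0 :=
    abs_ne_zero.2 fun h => hne (by rw [eq_neg_of_add_eq_zero_left h, neg_sq])
  have hx_sq : 0 ≤ 1 - q.1 ^ 2 := by nlinarith
  have hy_sq : 0 ≤ 1 - q.2 ^ 2 := by nlinarith
  have sub_eq : 1 - (quadMap q).1 + (quadMap q).2 = |q.1 - q.2| ^ (2 : ℝ) := by
    rw [Real.rpow_two, sq_abs, quadMap]; ring
  have add_eq : 1 + (quadMap q).1 + (quadMap q).2 = |q.1 + q.2| ^ (2 : ℝ) := by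
    rw [Real.rpow_two, sq_abs, quadMap]; ring
  have disc_eq : (quadMap q).1 ^ 2 - 4 * (quadMap q).2 = 4 * (1 - q.1 ^ 2) * (1 - q.2 ^ 2) := by
    rw [quadMap]; ring
  have jac_eq : |q.1 ^ 2 - q.2 ^ 2| = |q.1 - q.2| * |q.1 + q.2| := by
    rw [sq_sub_sq, abs_mul, mul_comm]
  rw [squareWeight, quadPullback, koornwinderWeight, sub_eq, add_eq, disc_eq, jac_eq,
    ← Real.rpow_mul (abs_nonneg _), ← Real.rpow_mul (abs_nonneg _), Real.rpow_add_one hsub,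
    Real.rpow_add_one hadd, Real.mul_rpow (mul_nonneg zero_le_four hx_sq) hy_sq,
    Real.mul_rpow zero_le_four hx_sq]
  ring

lemma isONBVn_squareWeight (hW : IntegrableOn (koornwinderWeight a α β γ) omegaDom)
    (ha : 0 < a) (hb : 0 < b) (hc : 0 < c) {P Q : ℕ → MvPolynomial (Fin 2) ℝ}
    (hP : isONBVn omegaDom (koornwinderWeight b (α + (e 1 : ℕ)) (β + (e 0 : ℕ)) γ) n P)
    (hQ : ∀ m, m + 1 = n + ∑ i, (e i : ℕ) → isONBVn omegaDom
      (koornwinderWeight c (α + ((e + 1) 1 : ℕ)) (β + ((e + 1) 0 : ℕ)) γ) m Q) :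
    isONBVn sqDom (squareWeight a α β γ) (2 * n + ∑ i, (e i : ℕ)) fun k =>
      if k ≤ n then √(b / a) • sectorLift e (P k)
      else √(c / a) • sectorLift (e + 1) (Q (k - n - 1)) := by
  have weight_ae_eq : squareWeight a α β γ =ᵐ[volume.restrict sqDom]
      quadPullback (koornwinderWeight a α β γ) := by
    filter_upwards [ae_restrict_mem measurableSet_sqDom, ae_restrict_of_ae ae_sq_ne_sq]
      with q hq hne using squareWeight_eq_quadPullback hq hne
  simpa only [map_smul] using (isONBVn_congr_ae weight_ae_eq).2 <|
    isONBVn_sectorLift hW (fun _ => koornwinderWeight_pos ha)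
      (isONBVn_sectorWeight_koornwinderWeight ha hb hP)
      fun m hm => isONBVn_sectorWeight_koornwinderWeight ha hc (hQ m hm)

end KoornwinderWeight

/-- the orthonormal bases of `V_{2n}(𝒲_{α,β,γ})` and
`V_{2n+1}(𝒲_{α,β,γ})` on the square, built from orthonormal bases for the
Koornwinder weights `W_{α',β',γ}` on `Ω`. -/
theorem stmt_7
    (α β γ : ℝ) (hα : -1 < α) (hβ : -1 < β) (hγ : -1 < γ)
    (hαγ : 0 < α + γ + 3/2) (hβγ : 0 < β + γ + 3/2)
    (a00 a11 a01 a10 : ℝ)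
    (ha00p : 0 < a00) (ha11p : 0 < a11) (ha01p : 0 < a01) (ha10p : 0 < a10)
    (ha00 : (∫ q in omegaDom, 2 * a00 * (1 - q.1 + q.2) ^ α * (1 + q.1 + q.2) ^ β
        * (q.1^2 - 4*q.2) ^ γ) = 1)
    (ha11 : (∫ q in omegaDom, 2 * a11 * (1 - q.1 + q.2) ^ (α+1) * (1 + q.1 + q.2) ^ (β+1)
        * (q.1^2 - 4*q.2) ^ γ) = 1)
    (ha01 : (∫ q in omegaDom, 2 * a01 * (1 - q.1 + q.2) ^ α * (1 + q.1 + q.2) ^ (β+1)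
        * (q.1^2 - 4*q.2) ^ γ) = 1)
    (ha10 : (∫ q in omegaDom, 2 * a10 * (1 - q.1 + q.2) ^ (α+1) * (1 + q.1 + q.2) ^ β
        * (q.1^2 - 4*q.2) ^ γ) = 1)
    (Wab Wa1b1 Wab1 Wa1b : ℝ × ℝ → ℝ)
    (hWab : ∀ q : ℝ × ℝ, Wab q
      = 2 * a00 * (1 - q.1 + q.2) ^ α * (1 + q.1 + q.2) ^ β * (q.1^2 - 4*q.2) ^ γ)
    (hWa1b1 : ∀ q : ℝ × ℝ, Wa1b1 q
      = 2 * a11 * (1 - q.1 + q.2) ^ (α+1) * (1 + q.1 + q.2) ^ (β+1) * (q.1^2 - 4*q.2) ^ γ)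
    (hWab1 : ∀ q : ℝ × ℝ, Wab1 q
      = 2 * a01 * (1 - q.1 + q.2) ^ α * (1 + q.1 + q.2) ^ (β+1) * (q.1^2 - 4*q.2) ^ γ)
    (hWa1b : ∀ q : ℝ × ℝ, Wa1b q
      = 2 * a10 * (1 - q.1 + q.2) ^ (α+1) * (1 + q.1 + q.2) ^ β * (q.1^2 - 4*q.2) ^ γ)
    (CW : ℝ × ℝ → ℝ)
    (hCW : ∀ q : ℝ × ℝ, CW q
      = 2 * a00 * (4:ℝ) ^ γ * |q.1 - q.2| ^ (2*α+1) * |q.1 + q.2| ^ (2*β+1)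
        * (1 - q.1^2) ^ γ * (1 - q.2^2) ^ γ)
    (Pab Pa1b1 Pab1 Pa1b : ℕ → ℕ → MvPolynomial (Fin 2) ℝ)
    (hPab : ∀ n, isONBVn omegaDom Wab n (fun k => Pab k n))
    (hPa1b1 : ∀ n, isONBVn omegaDom Wa1b1 n (fun k => Pa1b1 k n))
    (hPab1 : ∀ n, isONBVn omegaDom Wab1 n (fun k => Pab1 k n))
    (hPa1b : ∀ n, isONBVn omegaDom Wa1b n (fun k => Pa1b k n)) :
    ∀ n : ℕ,
      isONBVn sqDom CW (2*n) (fun k =>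
        if k ≤ n then quadSub (Pab k n)
        else MvPolynomial.C (Real.sqrt (a11 / a00)) *
          ((MvPolynomial.X 0 ^ 2 - MvPolynomial.X 1 ^ 2)
            * quadSub (Pa1b1 (k - n - 1) (n - 1)))) ∧
      isONBVn sqDom CW (2*n+1) (fun k =>
        if k ≤ n then MvPolynomial.C (Real.sqrt (a01 / a00)) *
          ((MvPolynomial.X 0 + MvPolynomial.X 1) * quadSub (Pab1 k n))
        else MvPolynomial.C (Real.sqrt (a10 / a00)) *
          ((MvPolynomial.X 0 - MvPolynomial.X 1) * quadSub (Pa1b (k - n - 1) n))) := by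
  obtain rfl : Wab = koornwinderWeight a00 α β γ := funext hWab
  obtain rfl : Wa1b1 = koornwinderWeight a11 (α + 1) (β + 1) γ := funext hWa1b1
  obtain rfl : Wab1 = koornwinderWeight a01 α (β + 1) γ := funext hWab1
  obtain rfl : Wa1b = koornwinderWeight a10 (α + 1) β γ := funext hWa1b
  obtain rfl : CW = squareWeight a00 α β γ := funext hCW
  have hW : IntegrableOn (koornwinderWeight a00 α β γ) omegaDom :=
    not_imp_comm.1 integral_undef (ha00.trans_ne one_ne_zero)
  intro n
  have even := isONBVn_squareWeight (e := ![0, 0]) hW ha00p ha00p ha11p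
    (P := fun k => Pab k n) (Q := fun k => Pa1b1 k (n - 1)) (by simpa using hPab n) fun m hm => by
      obtain rfl : m = n - 1 := Nat.eq_sub_of_add_eq hm
      simpa using hPa1b1 (n - 1)
  have odd := isONBVn_squareWeight (e := ![1, 0]) hW ha00p ha01p ha10p
    (P := fun k => Pab1 k n) (Q := fun k => Pa1b k n) (by simpa using hPab1 n) fun m hm => by
      obtain rfl : m = n := Nat.succ_injective hm
      simpa using hPa1b m
  rw [show (![0, 0] : Fin 2 → Fin 2) + 1 = ![1, 1] by decide] at even
  rw [show (![1, 0] : Fin 2 → Fin 2) + 1 = ![0, 1] by decide] at odd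
  constructor
  · simpa [sectorLift_apply, sectorGen_eq, smul_eq_C_mul, div_self ha00p.ne', sq_sub_sq] using even
  · simpa [sectorLift_apply, sectorGen_eq, smul_eq_C_mul] using odd
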